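/- For every positive integer k, the class of finite matroids with decomposition-width at most k is minor-closed: if N is a minor of a finite matroid M (obtained from M by deletions and contractions) and dw(M) ≤ k, then dw(N) ≤ k. -/

import Mathlib

open scoped Classical

/-- A set-system: a finite ground set `E` together with a family `Ind` of subsets of `E`,
called the independent sets. -/
structure SetSystem (α : Type) where
  E : Finset α
  Ind : Set (Finset α)
  ind_subset : ∀ X ∈ Ind, X ⊆ E

namespace SetSystem

variable {α : Type}

/-- The relation `X ∼_U X'`: for every `Z ⊆ E − U`, `X ∪ Z` is independent iff `X' ∪ Z` is. -/
def Eqv (S : SetSystem α) (U : Finset α) (X X' : Finset α) : Prop :=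
  ∀ Z : Finset α, Z ⊆ S.E \ U → ((X ∪ Z) ∈ S.Ind ↔ (X' ∪ Z) ∈ S.Ind)

/-- `∼_U` as a setoid on the subsets of `U`. -/
def eqvSetoid (S : SetSystem α) (U : Finset α) : Setoid {X : Finset α // X ⊆ U} where
  r X X' := S.Eqv U X.1 X'.1
  iseqv := ⟨fun _ _ _ => Iff.rfl, fun h Z hZ => (h Z hZ).symm,
    fun h h' Z hZ => (h Z hZ).trans (h' Z hZ)⟩

/-- The number of equivalence classes of `∼_U` on the subsets of `U`. -/
noncomputable def numClasses (S : SetSystem α) (U : Finset α) : ℕ :=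
  Nat.card (Quotient (S.eqvSetoid U))

end SetSystem

/-- A decomposition of a finite ground set `E`: a subcubic tree (every vertex has degree
one or three) together with a bijection from `E` to the set of leaves (degree-one vertices). -/
structure Decomp (α : Type) (E : Finset α) where
  V : Type
  [fintypeV : Fintype V]
  [decEqV : DecidableEq V]
  G : SimpleGraph V
  [decAdj : DecidableRel G.Adj]
  isTree : G.IsTree
  subcubic : ∀ v : V, G.degree v = 1 ∨ G.degree v = 3
  leaf : α → V
  leaf_degree : ∀ a ∈ E, G.degree (leaf a) = 1
  leaf_injOn : Set.InjOn leaf ↑E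
  leaf_surj : ∀ v : V, G.degree v = 1 → ∃ a ∈ E, leaf a = v

namespace Decomp

attribute [instance] fintypeV decEqV decAdj

variable {α : Type} {E : Finset α}

/-- The set `U ⊆ E` is displayed by an edge `uv` of the decomposition: it consists of those
elements of `E` whose leaf lies in the component of `T − uv` containing `u`. -/
def Displays (D : Decomp α E) (U : Finset α) : Prop :=
  U ⊆ E ∧ ∃ u v : D.V, D.G.Adj u v ∧
    ∀ a ∈ E, (a ∈ U ↔ (D.G.deleteEdges {s(u, v)}).Reachable (D.leaf a) u)

end Decomp

namespace SetSystem

variable {α : Type}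

/-- The decomposition-width of a set-system: the least `k` such that some decomposition has
all displayed sets `U` with at most `k` equivalence classes under `∼_U`. -/
noncomputable def dw (S : SetSystem α) : ℕ :=
  sInf {k : ℕ | ∃ D : Decomp α S.E, ∀ U : Finset α, D.Displays U → S.numClasses U ≤ k}

end SetSystem

namespace Matroid

variable {α : Type}

/-- The set-system of independent sets of a matroid on a finite type. -/
noncomputable def toSetSystem [Fintype α] (M : Matroid α) : SetSystem α where
  E := M.E.toFinite.toFinset
  Ind := {X : Finset α | M.Indep ↑X}
  ind_subset := fun _X hX _a ha =>
    (Set.Finite.mem_toFinset _).2 (hX.subset_ground (Finset.mem_coe.2 ha))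

/-- The decomposition-width of a matroid. -/
noncomputable def dw [Fintype α] (M : Matroid α) : ℕ := M.toSetSystem.dw

/-- The rank of a set in a matroid: the largest size of an independent subset. -/
noncomputable def rank [Fintype α] (M : Matroid α) (U : Set α) : ℕ :=
  sSup {n : ℕ | ∃ X : Finset α, ↑X ⊆ U ∧ M.Indep ↑X ∧ X.card = n}

/-- The connectivity function `λ_M(U) = r(U) + r(E − U) − r(M)`. -/
noncomputable def lambda [Fintype α] (M : Matroid α) (U : Set α) : ℕ :=
  M.rank U + M.rank (M.E \ U) - M.rank M.E

/-- The branch-width of a matroid: the least `k` such that some decomposition of the ground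
set has `λ_M(U) + 1 ≤ k` for every displayed set `U`. -/
noncomputable def bw [Fintype α] (M : Matroid α) : ℕ :=
  sInf {k : ℕ | ∃ D : Decomp α M.toSetSystem.E,
    ∀ U : Finset α, D.Displays U → M.lambda ↑U + 1 ≤ k}

/-- Deletion of a set of elements from a matroid. -/
def del (M : Matroid α) (D : Set α) : Matroid α := M ↾ (M.E \ D)

/-- Contraction of a set of elements in a matroid, defined via duality. -/
def con (M : Matroid α) (C : Set α) : Matroid α := (M✶ ↾ (M.E \ C))✶

/-- `N` is a minor of `M`: `N` is obtained from `M` by contractions and deletions. -/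
def IsMinorOf (N M : Matroid α) : Prop :=
  ∃ C D : Set α, C ⊆ M.E ∧ D ⊆ M.E ∧ Disjoint C D ∧ N = (M.con C).del D

/-- A pigeonhole class of matroids: every subclass of bounded branch-width has bounded
decomposition-width. -/
def PigeonholeClass [Fintype α] (𝓜 : Set (Matroid α)) : Prop :=
  ∀ lam : ℕ, 0 < lam → ∃ ρ : ℕ, ∀ M ∈ 𝓜, M.bw ≤ lam → M.dw ≤ ρ

end Matroid

/-- A `Σ`-tree: a finite full binary tree with `Γ`-labelled vertices. -/
inductive STree (Γ : Type) : Type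
  | leaf : Γ → STree Γ
  | node : Γ → STree Γ → STree Γ → STree Γ

/-- A tree automaton with alphabet `Γ`, state set `Q`, accepting states `accept`, and
(partial) transition rules `δ0` and `δ2`. -/
structure TreeAut (Γ : Type) (Q : Type) where
  accept : Finset Q
  δ0 : Γ → Option (Finset Q)
  δ2 : Γ → Q → Q → Option (Finset Q)

namespace STree

variable {Γ : Type}

/-- The number of leaves of a tree. -/
def leafCount : STree Γ → ℕ
  | .leaf _ => 1
  | .node _ l r => l.leafCount + r.leafCount

/-- `Subtree s t` means `s` is the subtree of `t` rooted at one of the vertices of `t`. -/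
inductive Subtree : STree Γ → STree Γ → Prop
  | refl (t : STree Γ) : Subtree t t
  | left {s l r : STree Γ} {a : Γ} : Subtree s l → Subtree s (.node a l r)
  | right {s l r : STree Γ} {a : Γ} : Subtree s r → Subtree s (.node a l r)

/-- Relabel the vertices of a tree: each leaf label is transformed by `f` applied to its
left-to-right index (offset by the second argument), internal labels by `g`. -/
def relabel {Γ' : Type} (f : ℕ → Γ → Γ') (g : Γ → Γ') : STree Γ → ℕ → STree Γ'
  | .leaf a, k => .leaf (f k a)
  | .node a l r, k => .node (g a) (l.relabel f g k) (r.relabel f g (k + l.leafCount))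

end STree

namespace TreeAut

variable {Γ Q : Type}

/-- The run of a tree automaton on a `Σ`-tree, computed bottom-up: a leaf receives
`δ0` of its label, an internal vertex the union of `δ2` over pairs of states at its
children (the empty set if any needed transition is undefined). -/
noncomputable def run (A : TreeAut Γ Q) : STree Γ → Finset Q
  | .leaf a => (A.δ0 a).getD ∅
  | .node a l r =>
      if ∀ qL ∈ A.run l, ∀ qR ∈ A.run r, (A.δ2 a qL qR).isSome then
        (A.run l).biUnion fun qL => (A.run r).biUnion fun qR => (A.δ2 a qL qR).getD ∅
      else ∅

/-- The automaton accepts a tree if the set of states assigned to the root contains an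
accepting state. -/
def Accepts (A : TreeAut Γ Q) (t : STree Γ) : Prop :=
  ∃ q ∈ A.run t, q ∈ A.accept

/-- A deterministic automaton: every image of `δ0` and `δ2` is a singleton. -/
def Deterministic (A : TreeAut Γ Q) : Prop :=
  (∀ a s, A.δ0 a = some s → s.card = 1) ∧
    (∀ a q₁ q₂ s, A.δ2 a q₁ q₂ = some s → s.card = 1)

end TreeAut

/-- The alphabet `Σ ∪ Σ × {0,1}^I`. -/
abbrev EncAlph (Γ : Type) (I : Finset ℕ) : Type := Γ ⊕ Γ × ({j // j ∈ I} → Bool)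

/-- `enc(T, σ, φ, {Y_j}_{j ∈ I})`: relabel each leaf `v` of the tree with `(σ(v), s)`, where
`s(j) = 1` iff `φ⁻¹(v) ∈ Y_j`; internal vertices keep their labels. -/
noncomputable def enc {α Γ : Type} (E : Finset α) (t : STree Γ)
    (φ : {a // a ∈ E} ≃ Fin t.leafCount) (I : Finset ℕ)
    (Y : {j // j ∈ I} → Finset α) : STree (EncAlph Γ I) :=
  t.relabel
    (fun k a => Sum.inr (a, fun j =>
      if h : k < t.leafCount then
        decide ((φ.symm ⟨k, h⟩ : {a // a ∈ E}).1 ∈ Y j) else false))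
    Sum.inl 0

/-- An `I`-ary automaton: `δ0` is defined only on leaf labels from `Σ × {0,1}^I`. -/
def TreeAut.IsIary {Γ Q : Type} (I : Finset ℕ) (A : TreeAut (EncAlph Γ I) Q) : Prop :=
  ∀ a : Γ, A.δ0 (Sum.inl a) = none

/-- The set-system `M(A, T, σ, φ)` determined by an `{i}`-ary automaton `A` and a parse
tree: a subset `Y ⊆ E` is independent iff `A` accepts `enc(T, σ, φ, {Y})`. -/
noncomputable def systemOf {α Γ Q : Type} (i : ℕ) (A : TreeAut (EncAlph Γ {i}) Q)
    (E : Finset α) (t : STree Γ) (φ : {a // a ∈ E} ≃ Fin t.leafCount) : SetSystem α where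
  E := E
  Ind := {Y : Finset α | Y ⊆ E ∧ A.Accepts (enc E t φ {i} fun _ => Y)}
  ind_subset := fun _ hY => hY.1

/-- A class of set-systems is automatic: there is a single `{i}`-ary tree automaton which
recognises independence in every member, via a suitable parse tree for each member. -/
def Automatic {α : Type} (𝓜 : Set (SetSystem α)) : Prop :=
  ∃ (Γ : Type) (_ : Fintype Γ) (Q : Type) (_ : Fintype Q) (i : ℕ)
    (A : TreeAut (EncAlph Γ {i}) Q), A.IsIary {i} ∧
      ∀ S ∈ 𝓜, ∃ (t : STree Γ) (φ : {a // a ∈ S.E} ≃ Fin t.leafCount),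
        S = systemOf i A S.E t φ

/-- Formulas of counting monadic second-order logic `CMS₀`, with set variables `X_n`:
atomic formulas `Ind(X_i)`, `X_i ⊆ X_j` and `|X_i|_{p,q}`, closed under `¬`, `∧`, `∃`. -/
inductive CMS0 : Type
  | ind : ℕ → CMS0
  | subset : ℕ → ℕ → CMS0
  | card : ℕ → ℕ → ℕ → CMS0
  | not : CMS0 → CMS0
  | and : CMS0 → CMS0 → CMS0
  | ex : ℕ → CMS0 → CMS0

namespace CMS0

/-- The free variables of a `CMS₀` formula. -/
def free : CMS0 → Finset ℕ
  | .ind i => {i}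
  | .subset i j => {i, j}
  | .card i _ _ => {i}
  | .not φ => φ.free
  | .and φ ψ => φ.free ∪ ψ.free
  | .ex i φ => φ.free.erase i

/-- Satisfaction of a `CMS₀` formula by a set-system under an interpretation `θ` assigning
subsets of the ground set to variables. -/
def Sat {α : Type} (S : SetSystem α) (θ : ℕ → Finset α) : CMS0 → Prop
  | .ind i => θ i ∈ S.Ind
  | .subset i j => θ i ⊆ θ j
  | .card i p q => (θ i).card % q = p
  | .not φ => ¬ Sat S θ φ
  | .and φ ψ => Sat S θ φ ∧ Sat S θ ψ
  | .ex i φ => ∃ Y : Finset α, Y ⊆ S.E ∧ Sat S (Function.update θ i Y) φ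

end CMS0

/-!
Contracting a tree along pairwise disjoint connected sets of vertices gives a tree, each edge of
which comes from a unique edge of the original tree and separates the vertices in the same way. A
leaf is deleted from a subcubic tree by contracting it, together with its neighbour of degree three,
onto a second neighbour of the latter. So a decomposition of `E` can be cut down to any `E' ⊆ E`
with at least two elements in such a way that the displayed sets are the traces `U ∩ E'` of sets `U`
displayed before.

If `N = M / C \ D` and `B` is a basis of `C` in `M`, then `X` is independent in `N` if and only if
`X ∪ B` is independent in `M`. Hence `X ↦ X ∪ (B ∩ U)` induces an injection from the classes of
`∼_{U ∩ E(N)}` in `N` to those of `∼_U` in `M`.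
-/

section Contraction

variable {V W : Type*} {G : SimpleGraph V} {π : V → W}

theorem reachable_map_of_forall_adj {H : SimpleGraph W}
    (hπ : ∀ a b, G.Adj a b → H.Reachable (π a) (π b)) {a b : V} (hab : G.Reachable a b) :
    H.Reachable (π a) (π b) := by
  simp only [SimpleGraph.reachable_iff_reflTransGen] at hπ hab ⊢
  exact Relation.ReflTransGen.lift' π hπ a b hab

theorem not_reachable_deleteEdges (hG : G.IsAcyclic) {a b : V} (hab : G.Adj a b) :
    ¬ (G.deleteEdges {s(a, b)}).Reachable a b :=
  SimpleGraph.isBridge_iff.1 (SimpleGraph.isAcyclic_iff_forall_adj_isBridge.1 hG hab)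

/-- `π` contracts pairwise disjoint nonempty connected sets of vertices of `G`, one for each
element of `W`, so that `G.map π` is the resulting contraction of `G`. -/
def HasConnectedFibers (G : SimpleGraph V) (π : V → W) : Prop :=
  ∀ p, (G.induce (π ⁻¹' {p})).Connected

namespace HasConnectedFibers

theorem surjective (hπ : HasConnectedFibers G π) : π.Surjective := fun p ↦
  let ⟨a⟩ := (hπ p).nonempty
  ⟨a, a.2⟩

theorem reachable_deleteEdges (hπ : HasConnectedFibers G π) {a b c d : V} (hab : π a ≠ π b)
    (hcd : π c = π d) : (G.deleteEdges {s(a, b)}).Reachable c d := by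
  let toDeleted : G.induce (π ⁻¹' {π d}) →g G.deleteEdges {s(a, b)} :=
    { toFun := Subtype.val
      map_rel' := by
        rintro ⟨u, hu : π u = π d⟩ ⟨v, hv : π v = π d⟩ huv
        refine SimpleGraph.deleteEdges_adj.2 ⟨huv, fun he ↦ hab ?_⟩
        obtain ⟨rfl, rfl⟩ | ⟨rfl, rfl⟩ := Sym2.eq_iff.1 he
        exacts [hu.trans hv.symm, hv.trans hu.symm] }
  exact ((hπ (π d)).preconnected ⟨c, hcd⟩ ⟨d, rfl⟩).map toDeleted

-- A second edge between the two fibers would close a cycle through them.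
theorem eq_of_adj_of_adj (hπ : HasConnectedFibers G π) (hG : G.IsAcyclic) {a b c d : V}
    (hab : G.Adj a b) (hcd : G.Adj c d) (hne : π a ≠ π b) (hac : π a = π c) (hbd : π b = π d) :
    a = c ∧ b = d := by
  by_contra hdistinct
  have hcd' : (G.deleteEdges {s(a, b)}).Adj c d := by
    refine SimpleGraph.deleteEdges_adj.2 ⟨hcd, fun he ↦ ?_⟩
    obtain ⟨rfl, rfl⟩ | ⟨rfl, rfl⟩ := Sym2.eq_iff.1 he
    exacts [hdistinct ⟨rfl, rfl⟩, hne hac]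
  exact not_reachable_deleteEdges hG hab <| (hπ.reachable_deleteEdges hne hac).trans <|
    hcd'.reachable.trans (hπ.reachable_deleteEdges hne hbd.symm)

theorem reachable_map_deleteEdges_iff (hπ : HasConnectedFibers G π) (hG : G.IsAcyclic)
    {a b : V} (hab : G.Adj a b) (hne : π a ≠ π b) (c d : V) :
    ((G.map π).deleteEdges {s(π a, π b)}).Reachable (π c) (π d) ↔
      (G.deleteEdges {s(a, b)}).Reachable c d := by
  constructor
  · intro h
    -- Any choice of representatives maps the edges of the contraction to walks in `G`.
    let rep := Function.surjInv hπ.surjective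
    have hrep (p : W) : π (rep p) = p := Function.surjInv_eq hπ.surjective p
    have hlift : (G.deleteEdges {s(a, b)}).Reachable (rep (π c)) (rep (π d)) := by
      refine reachable_map_of_forall_adj (fun p q hpq ↦ ?_) h
      obtain ⟨hpq, hpq_ne⟩ := SimpleGraph.deleteEdges_adj.1 hpq
      obtain ⟨-, u, v, huv, rfl, rfl⟩ := (SimpleGraph.map_adj' π G p q).1 hpq
      have huv' : (G.deleteEdges {s(a, b)}).Adj u v :=
        SimpleGraph.deleteEdges_adj.2 ⟨huv, fun he ↦ hpq_ne (congrArg (Sym2.map π) he)⟩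
      exact (hπ.reachable_deleteEdges hne (hrep _)).trans <|
        huv'.reachable.trans (hπ.reachable_deleteEdges hne (hrep _).symm)
    exact (hπ.reachable_deleteEdges hne (hrep _).symm).trans <|
      hlift.trans (hπ.reachable_deleteEdges hne (hrep _))
  · refine reachable_map_of_forall_adj fun u v huv ↦ ?_
    obtain ⟨huv, huv_ne⟩ := SimpleGraph.deleteEdges_adj.1 huv
    by_cases hπuv : π u = π v
    · rw [hπuv]
    refine (SimpleGraph.deleteEdges_adj.2
      ⟨SimpleGraph.map_adj_apply' huv hπuv, fun he ↦ huv_ne ?_⟩).reachable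
    obtain ⟨hu, hv⟩ | ⟨hu, hv⟩ := Sym2.eq_iff.1 he
    · obtain ⟨rfl, rfl⟩ := hπ.eq_of_adj_of_adj hG hab huv hne hu.symm hv.symm
      rfl
    · obtain ⟨rfl, rfl⟩ := hπ.eq_of_adj_of_adj hG hab huv.symm hne hv.symm hu.symm
      exact Sym2.eq_swap

theorem connected_map (hπ : HasConnectedFibers G π) (hG : G.Connected) :
    (G.map π).Connected := by
  have : Nonempty W := hG.nonempty.map π
  refine ⟨hπ.surjective.forall₂.2 fun a b ↦ ?_⟩
  refine reachable_map_of_forall_adj (fun u v huv ↦ ?_) (hG.preconnected a b)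
  by_cases hne : π u = π v
  · rw [hne]
  · exact (SimpleGraph.map_adj_apply' huv hne).reachable

theorem isAcyclic_map (hπ : HasConnectedFibers G π) (hG : G.IsAcyclic) :
    (G.map π).IsAcyclic := by
  refine SimpleGraph.isAcyclic_iff_forall_adj_isBridge.2 fun p q hpq ↦ ?_
  obtain ⟨hne, a, b, hab, rfl, rfl⟩ := (SimpleGraph.map_adj' π G p q).1 hpq
  rw [SimpleGraph.isBridge_iff, hπ.reachable_map_deleteEdges_iff hG hab hne]
  exact not_reachable_deleteEdges hG hab

theorem isTree_map (hπ : HasConnectedFibers G π) (hG : G.IsTree) : (G.map π).IsTree :=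
  ⟨hπ.connected_map hG.connected, hπ.isAcyclic_map hG.isAcyclic⟩

theorem degree_map [Fintype V] [DecidableEq W] [G.LocallyFinite] [(G.map π).LocallyFinite]
    (hπ : HasConnectedFibers G π) (hG : G.IsAcyclic) (p : W) :
    (G.map π).degree p =
      ∑ a with π a = p, (Finset.card {b ∈ G.neighborFinset a | π b ≠ p}) := by
  rw [← Finset.card_sigma, ← SimpleGraph.card_neighborFinset_eq_degree]
  symm
  refine Finset.card_bij (fun e _ ↦ π e.2) ?_ ?_ ?_
  · rintro ⟨a, b⟩ he
    obtain ⟨rfl, hab, hne⟩ : π a = p ∧ G.Adj a b ∧ π b ≠ p := by simpa using he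
    exact (SimpleGraph.mem_neighborFinset ..).2 (SimpleGraph.map_adj_apply' hab hne.symm)
  · rintro ⟨a, b⟩ he ⟨c, d⟩ he' hbd
    obtain ⟨rfl, hab, hne⟩ : π a = p ∧ G.Adj a b ∧ π b ≠ p := by simpa using he
    obtain ⟨hca, hcd, -⟩ : π c = π a ∧ G.Adj c d ∧ π d ≠ π a := by simpa using he'
    obtain ⟨rfl, rfl⟩ := hπ.eq_of_adj_of_adj hG hab hcd hne.symm hca.symm hbd
    rfl
  · intro q hpq
    obtain ⟨hne, a, b, hab, rfl, rfl⟩ :=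
      (SimpleGraph.map_adj' π G p q).1 ((SimpleGraph.mem_neighborFinset ..).1 hpq)
    exact ⟨⟨a, b⟩, by simp [hab, hne.symm], rfl⟩

end HasConnectedFibers

end Contraction

section DegreeOne

variable {V : Type*} {G : SimpleGraph V} {l w : V}

theorem adj_iff_eq_of_degree_eq_one [Fintype (G.neighborSet l)] (hlw : G.Adj l w)
    (hl : G.degree l = 1) {v : V} : G.Adj l v ↔ v = w := by
  obtain ⟨u, hu⟩ := Finset.card_eq_one.1 hl
  simp only [← SimpleGraph.mem_neighborFinset, hu, Finset.mem_singleton] at hlw ⊢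
  rw [hlw]

theorem eq_or_eq_of_degree_eq_one_of_degree_eq_one [Fintype (G.neighborSet l)]
    [Fintype (G.neighborSet w)] (hG : G.Connected) (hlw : G.Adj l w) (hl : G.degree l = 1)
    (hw : G.degree w = 1) (v : V) : v = l ∨ v = w := by
  by_contra hv
  obtain ⟨p⟩ := hG.preconnected l v
  obtain ⟨e, -, hfst, hsnd⟩ := p.exists_boundary_dart {l, w} (.inl rfl) hv
  obtain heq | heq : e.fst = l ∨ e.fst = w := hfst
  · exact hsnd (.inr ((adj_iff_eq_of_degree_eq_one hlw hl).1 (heq ▸ e.adj)))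
  · exact hsnd (.inl ((adj_iff_eq_of_degree_eq_one hlw.symm hw).1 (heq ▸ e.adj)))

end DegreeOne

section FoldLeaf

variable {V : Type*} {G : SimpleGraph V} {l w : V} {y : {v : V // v ≠ l ∧ v ≠ w}}

/-- The retraction of `V` that moves `l` and `w` to `y`. If `l` is a leaf of a tree, `w` its
neighbour, of degree three, and `y` another neighbour of `w`, then contracting along it deletes `l`
and suppresses `w`. -/
noncomputable def foldLeaf (l w : V) (y : {v : V // v ≠ l ∧ v ≠ w}) (v : V) :
    {v : V // v ≠ l ∧ v ≠ w} :=
  if hv : v ≠ l ∧ v ≠ w then ⟨v, hv⟩ else y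

theorem foldLeaf_coe (v : {v : V // v ≠ l ∧ v ≠ w}) : foldLeaf l w y v = v :=
  dif_pos v.2

theorem foldLeaf_eq_iff {v : V} {p : {v : V // v ≠ l ∧ v ≠ w}} :
    foldLeaf l w y v = p ↔ v = p ∨ p = y ∧ (v = l ∨ v = w) := by
  have := p.2
  unfold foldLeaf
  split_ifs <;> grind

theorem hasConnectedFibers_foldLeaf (hlw : G.Adj l w) (hwy : G.Adj w y) :
    HasConnectedFibers G (foldLeaf l w y) := by
  refine fun p ↦ (SimpleGraph.connected_iff_exists_forall_reachable _).2
    ⟨⟨p, foldLeaf_coe p⟩, fun ⟨v, hv⟩ ↦ ?_⟩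
  obtain rfl | ⟨rfl, rfl | rfl⟩ := foldLeaf_eq_iff.1 hv
  · rfl
  · have hw : foldLeaf v w p w = p := foldLeaf_eq_iff.2 (.inr ⟨rfl, .inr rfl⟩)
    have hpw : (G.induce (foldLeaf v w p ⁻¹' {p})).Adj ⟨p, foldLeaf_coe p⟩ ⟨w, hw⟩ := hwy.symm
    have hwv : (G.induce (foldLeaf v w p ⁻¹' {p})).Adj ⟨w, hw⟩ ⟨v, hv⟩ := hlw.symm
    exact hpw.reachable.trans hwv.reachable
  · exact SimpleGraph.Adj.reachable (G := G.induce _) hwy.symm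

theorem degree_map_foldLeaf [Finite V] [G.LocallyFinite]
    [(G.map (foldLeaf l w y)).LocallyFinite] (hG : G.IsAcyclic) (hlw : G.Adj l w)
    (hwy : G.Adj w y) (hl : G.degree l = 1) (hw : G.degree w = 3)
    (p : {v : V // v ≠ l ∧ v ≠ w}) : (G.map (foldLeaf l w y)).degree p = G.degree p := by
  have := Fintype.ofFinite V
  have hl_adj (v : V) : G.Adj l v ↔ v = w := adj_iff_eq_of_degree_eq_one hlw hl
  have mem_fiber (v : V) : v ∈ ({v | foldLeaf l w y v = p} : Finset V) ↔
      v = p ∨ p = y ∧ (v = l ∨ v = w) := by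
    rw [Finset.mem_filter_univ, foldLeaf_eq_iff]
  have mem_nbr (a b : V) : b ∈ ({b ∈ G.neighborFinset a | foldLeaf l w y b ≠ p} : Finset V) ↔
      G.Adj a b ∧ ¬ (b = p ∨ p = y ∧ (b = l ∨ b = w)) := by
    rw [Finset.mem_filter, SimpleGraph.mem_neighborFinset, ne_eq, foldLeaf_eq_iff]
  rw [(hasConnectedFibers_foldLeaf hlw hwy).degree_map hG]
  by_cases hpy : p = y
  · subst hpy
    have hfiber : ({v | foldLeaf l w p v = p} : Finset V) = {l, w, p.1} := by grind
    have hnbr_l : {b ∈ G.neighborFinset l | foldLeaf l w p b ≠ p} = ∅ := by grind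
    have hnbr_w : {b ∈ G.neighborFinset w | foldLeaf l w p b ≠ p} =
        ((G.neighborFinset w).erase l).erase p := by
      grind [SimpleGraph.irrefl, SimpleGraph.mem_neighborFinset]
    have hnbr_p : {b ∈ G.neighborFinset p | foldLeaf l w p b ≠ p} =
        (G.neighborFinset p).erase w := by
      grind [SimpleGraph.irrefl, SimpleGraph.adj_comm, SimpleGraph.mem_neighborFinset]
    have hcard_w : (((G.neighborFinset w).erase l).erase p.1).card = 1 := by
      rw [Finset.card_erase_of_mem (by simp [hwy, p.2]),
        Finset.card_erase_of_mem (by simp [hlw.symm]),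
        SimpleGraph.card_neighborFinset_eq_degree, hw]
    have hcard_p : ((G.neighborFinset p).erase w).card + 1 = G.degree p :=
      Finset.card_erase_add_one (by simpa using hwy.symm)
    rw [hfiber, Finset.sum_insert (by simp [hlw.ne, p.2.1.symm]),
      Finset.sum_pair p.2.2.symm, hnbr_l, hnbr_w, hnbr_p, hcard_w, ← hcard_p,
      Finset.card_empty, zero_add, add_comm]
  · have hfiber : ({v | foldLeaf l w y v = p} : Finset V) = {p.1} := by grind
    have hnbr : {b ∈ G.neighborFinset p | foldLeaf l w y b ≠ p} = G.neighborFinset p := by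
      grind [SimpleGraph.irrefl, SimpleGraph.mem_neighborFinset]
    rw [hfiber, Finset.sum_singleton, hnbr, SimpleGraph.card_neighborFinset_eq_degree]

end FoldLeaf

namespace Decomp

variable {α : Type} {E E' : Finset α}

theorem two_le_card (D : Decomp α E) : 2 ≤ E.card := by
  obtain ⟨v⟩ := D.isTree.connected.nonempty
  obtain ⟨w, hvw⟩ : ∃ w, D.G.Adj v w := by
    rw [← D.G.degree_pos_iff_exists_adj]
    have := D.subcubic v
    lia
  have : Nontrivial D.V := ⟨v, w, hvw.ne⟩
  obtain ⟨x, y, hxy, hx, hy⟩ := D.isTree.exists_ne_and_degree_eq_one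
  obtain ⟨a, ha, rfl⟩ := D.leaf_surj x hx
  obtain ⟨b, hb, rfl⟩ := D.leaf_surj y hy
  exact Finset.one_lt_card.2 ⟨a, ha, b, hb, fun hab ↦ hxy (congrArg D.leaf hab)⟩

/-- Every set displayed by `D'` is the trace on `E'` of a set displayed by `D`: the property needed
of a restriction `D'` of `D` to `E'`. -/
def IsTraceOf (D' : Decomp α E') (D : Decomp α E) : Prop :=
  ∀ U', D'.Displays U' → ∃ U, D.Displays U ∧ U' = U ∩ E'

theorem IsTraceOf.refl (D : Decomp α E) : D.IsTraceOf D := fun U hU ↦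
  ⟨U, hU, (Finset.inter_eq_left.2 hU.1).symm⟩

theorem IsTraceOf.trans {E'' : Finset α} {D'' : Decomp α E''} {D' : Decomp α E'} {D : Decomp α E}
    (h : D''.IsTraceOf D') (h' : D'.IsTraceOf D) (hE : E'' ⊆ E') : D''.IsTraceOf D := by
  intro U'' hU''
  obtain ⟨U', hU', rfl⟩ := h U'' hU''
  obtain ⟨U, hU, rfl⟩ := h' U' hU'
  exact ⟨U, hU, by rw [Finset.inter_assoc, Finset.inter_eq_right.2 hE]⟩

theorem isTraceOf_of_hasConnectedFibers {D : Decomp α E} {D' : Decomp α E'} (hE : E' ⊆ E)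
    {π : D.V → D'.V} (hπ : HasConnectedFibers D.G π) (hG : D'.G = D.G.map π)
    (hleaf : ∀ a ∈ E', D'.leaf a = π (D.leaf a)) : D'.IsTraceOf D := by
  rintro U' ⟨hU'E, p, q, hpq, hU'⟩
  rw [hG] at hpq
  obtain ⟨hne, u, v, huv, rfl, rfl⟩ := (SimpleGraph.map_adj' π D.G p q).1 hpq
  refine ⟨{a ∈ E | (D.G.deleteEdges {s(u, v)}).Reachable (D.leaf a) u},
    ⟨Finset.filter_subset _ _, u, v, huv, fun a ha ↦ by simp [ha]⟩, ?_⟩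
  ext a
  by_cases ha : a ∈ E'
  · rw [hU' a ha, hG, hleaf a ha,
      hπ.reachable_map_deleteEdges_iff D.isTree.isAcyclic huv hne]
    simp [ha, hE ha]
  · simp [ha, Finset.notMem_mono hU'E ha]

theorem degree_eq_three_of_adj_leaf (D : Decomp α E) (hE : 2 < E.card) {a : α} (ha : a ∈ E)
    {w : D.V} (haw : D.G.Adj (D.leaf a) w) : D.G.degree w = 3 := by
  refine (D.subcubic w).resolve_left fun hw ↦ ?_
  have hV := eq_or_eq_of_degree_eq_one_of_degree_eq_one D.isTree.connected haw
    (D.leaf_degree a ha) hw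
  have : E.card ≤ ({D.leaf a, w} : Finset D.V).card :=
    Finset.card_le_card_of_injOn D.leaf (fun b _ ↦ by simpa using hV (D.leaf b)) D.leaf_injOn
  have := Finset.card_le_two (a := D.leaf a) (b := w)
  lia

theorem exists_isTraceOf_erase (D : Decomp α E) (hE : 2 < E.card) {a : α} (ha : a ∈ E) :
    ∃ D' : Decomp α (E.erase a), D'.IsTraceOf D := by
  have hl := D.leaf_degree a ha
  obtain ⟨w, hlw⟩ := (D.G.degree_pos_iff_exists_adj _).1 (hl ▸ one_pos)
  have hw := D.degree_eq_three_of_adj_leaf hE ha hlw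
  obtain ⟨y, hwy, hyl⟩ : ∃ y ∈ D.G.neighborFinset w, y ≠ D.leaf a :=
    Finset.exists_mem_ne (by rw [D.G.card_neighborFinset_eq_degree, hw]; norm_num) _
  rw [SimpleGraph.mem_neighborFinset] at hwy
  let π := foldLeaf (D.leaf a) w ⟨y, hyl, hwy.ne'⟩
  have hπ : HasConnectedFibers D.G π := hasConnectedFibers_foldLeaf hlw hwy
  have hdegree (p) : (D.G.map π).degree p = D.G.degree p :=
    degree_map_foldLeaf D.isTree.isAcyclic hlw hwy hl hw p
  have hπ_leaf {b : α} (hb : b ∈ E.erase a) : (π (D.leaf b) : D.V) = D.leaf b := by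
    obtain ⟨hba, hb⟩ := Finset.mem_erase.1 hb
    have hne : D.leaf b ≠ D.leaf a ∧ D.leaf b ≠ w :=
      ⟨fun h ↦ hba (D.leaf_injOn hb ha h), fun h ↦ by have := D.leaf_degree b hb; grind⟩
    exact congrArg Subtype.val (foldLeaf_coe ⟨D.leaf b, hne⟩)
  let D' : Decomp α (E.erase a) :=
    { V := _
      G := D.G.map π
      isTree := hπ.isTree_map D.isTree
      subcubic p := by rw [hdegree]; exact D.subcubic p
      leaf b := π (D.leaf b)
      leaf_degree b hb := by
        rw [hdegree, hπ_leaf hb, D.leaf_degree b (Finset.mem_of_mem_erase hb)]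
      leaf_injOn b hb c hc hbc := by
        refine D.leaf_injOn (Finset.mem_of_mem_erase hb) (Finset.mem_of_mem_erase hc) ?_
        rw [← hπ_leaf hb, ← hπ_leaf hc]
        exact congrArg Subtype.val hbc
      leaf_surj p hp := by
        obtain ⟨b, hb, hbp⟩ := D.leaf_surj p (hdegree p ▸ hp)
        have hba : b ≠ a := by rintro rfl; exact p.2.1 hbp.symm
        exact ⟨b, Finset.mem_erase.2 ⟨hba, hb⟩, by rw [hbp]; exact foldLeaf_coe p⟩ }
  exact ⟨D', isTraceOf_of_hasConnectedFibers (Finset.erase_subset a E) hπ rfl fun _ _ ↦ rfl⟩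

theorem exists_isTraceOf (D : Decomp α E) (hsub : E' ⊆ E) (hE' : 2 ≤ E'.card) :
    ∃ D' : Decomp α E', D'.IsTraceOf D := by
  induction E using Finset.strongInduction with
  | H E ih =>
    obtain rfl | hssub := hsub.eq_or_ssubset
    · exact ⟨D, .refl D⟩
    obtain ⟨a, haE, haE'⟩ := Finset.exists_of_ssubset hssub
    obtain ⟨D₁, hD₁⟩ :=
      D.exists_isTraceOf_erase (hE'.trans_lt (Finset.card_lt_card hssub)) haE
    have hsub₁ : E' ⊆ E.erase a := Finset.subset_erase.2 ⟨hsub, haE'⟩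
    obtain ⟨D', hD'⟩ := ih _ (Finset.erase_ssubset haE) D₁ hsub₁
    exact ⟨D', hD'.trans hD₁ hsub₁⟩

end Decomp

section PendantGraph

variable {V W : Type*} {G : SimpleGraph V}

theorem isAcyclic_sum {H : SimpleGraph W} (hG : G.IsAcyclic) (hH : H.IsAcyclic) :
    (G ⊕g H).IsAcyclic := by
  refine SimpleGraph.isAcyclic_iff_forall_adj_isBridge.2 ?_
  rintro (u | u) (v | v) huv
  · refine SimpleGraph.isBridge_iff.2 fun h ↦
      not_reachable_deleteEdges hG (SimpleGraph.sum_adj_inl.1 huv)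
        (reachable_map_of_forall_adj (π := Sum.elim id fun _ ↦ u) ?_ h)
    rintro (a | a) (b | b) hab
    · exact SimpleGraph.Adj.reachable (by simpa using hab)
    all_goals simp at hab ⊢
  · simp at huv
  · simp at huv
  · refine SimpleGraph.isBridge_iff.2 fun h ↦
      not_reachable_deleteEdges hH (SimpleGraph.sum_adj_inr.1 huv)
        (reachable_map_of_forall_adj (π := Sum.elim (fun _ ↦ u) id) ?_ h)
    rintro (a | a) (b | b) hab
    on_goal 4 => exact SimpleGraph.Adj.reachable (by simpa using hab)
    all_goals simp at hab ⊢

/-- The graph obtained from `G` by attaching a new vertex `Sum.inr ()` to `l`. -/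
def pendantGraph (G : SimpleGraph V) (l : V) : SimpleGraph (V ⊕ Unit) :=
  (G ⊕g (⊥ : SimpleGraph Unit)) ⊔ SimpleGraph.edge (.inl l) (.inr ())

theorem isTree_pendantGraph (hG : G.IsTree) (l : V) : (pendantGraph G l).IsTree :=
  ⟨hG.connected.sum_sup_edge .of_subsingleton,
    (isAcyclic_sum hG.isAcyclic .of_subsingleton).sup_edge_of_not_reachable
      (SimpleGraph.not_reachable_sum_inl_inr _ _)⟩

theorem degree_pendantGraph_inr (l : V) [Fintype ((pendantGraph G l).neighborSet (.inr ()))] :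
    (pendantGraph G l).degree (.inr ()) = 1 := by
  rw [SimpleGraph.degree_eq_one_iff_existsUnique_adj]
  exact ⟨.inl l, by simp [pendantGraph, SimpleGraph.edge_adj],
    by simp [pendantGraph, SimpleGraph.edge_adj]⟩

theorem degree_pendantGraph_inl (l v : V) [Fintype (G.neighborSet v)]
    [Fintype ((pendantGraph G l).neighborSet (.inl v))] :
    (pendantGraph G l).degree (.inl v) = G.degree v + if v = l then 1 else 0 := by
  have hnbr : (pendantGraph G l).neighborFinset (.inl v) =
      (G.neighborFinset v).disjSum (if v = l then {()} else ∅) := by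
    ext (u | u) <;> rw [SimpleGraph.mem_neighborFinset] <;> split_ifs <;>
      simp [pendantGraph, SimpleGraph.edge_adj, *]
  rw [← SimpleGraph.card_neighborFinset_eq_degree, hnbr, Finset.card_disjSum,
    SimpleGraph.card_neighborFinset_eq_degree]
  split_ifs <;> rfl

end PendantGraph

section SubcubicTree

variable {V : Type*} [Fintype V] {G : SimpleGraph V} {l : V} {n : ℕ}

/-- `G` is a subcubic tree, that is a tree all of whose vertices have degree one or three, and it
has `n` leaves. -/
structure IsSubcubicTree (G : SimpleGraph V) (n : ℕ) : Prop where
  isTree : G.IsTree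
  subcubic : ∀ v, G.degree v = 1 ∨ G.degree v = 3
  card_leaves : Finset.card {v | G.degree v = 1} = n

theorem isSubcubicTree_pendantGraph_bot :
    IsSubcubicTree (pendantGraph (⊥ : SimpleGraph Unit) ()) 2 := by
  have hdegree (v) : (pendantGraph (⊥ : SimpleGraph Unit) ()).degree v = 1 := by
    obtain v | _ := v
    · simp [degree_pendantGraph_inl]
    · exact degree_pendantGraph_inr ()
  exact ⟨isTree_pendantGraph .of_subsingleton (), fun v ↦ .inl (hdegree v), by simp [hdegree]⟩

theorem IsSubcubicTree.pendantGraph_pendantGraph (hG : IsSubcubicTree G n)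
    (hl : G.degree l = 1) :
    IsSubcubicTree (pendantGraph (pendantGraph G l) (.inl l)) (n + 1) := by
  set H := pendantGraph (pendantGraph G l) (.inl l)
  have hdegree_old (v : V) :
      H.degree (.inl (.inl v)) = G.degree v + if v = l then 2 else 0 := by
    simp only [H, degree_pendantGraph_inl, Sum.inl.injEq]
    split_ifs <;> rfl
  have hdegree_fst : H.degree (.inl (.inr ())) = 1 := by
    simp only [H, degree_pendantGraph_inl, degree_pendantGraph_inr, reduceCtorEq, if_false]
  have hdegree_snd : H.degree (.inr ()) = 1 := degree_pendantGraph_inr _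
  refine ⟨isTree_pendantGraph (isTree_pendantGraph hG.isTree l) _, ?_, ?_⟩
  · rintro ((v | _) | _)
    · grind [hG.subcubic v]
    · exact .inl hdegree_fst
    · exact .inl hdegree_snd
  · have hleaves_old : ({v | H.degree (.inl (.inl v)) = 1} : Finset V) =
        ({v | G.degree v = 1} : Finset V).erase l := by
      ext v
      simp only [Finset.mem_filter_univ, Finset.mem_erase]
      grind
    have hcard_old : Finset.card {v | H.degree (.inl (.inl v)) = 1} + 1 = n := by
      rw [hleaves_old, Finset.card_erase_add_one (by simpa using hl), hG.card_leaves]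
    rw [← hcard_old]
    simp only [Finset.card_filter, Fintype.sum_sum_type, Fintype.sum_unique, hdegree_fst,
      hdegree_snd, if_true]

theorem exists_isSubcubicTree (n : ℕ) :
    ∃ (V : Type) (_ : Fintype V) (G : SimpleGraph V), IsSubcubicTree G (n + 2) := by
  induction n with
  | zero => exact ⟨_, inferInstance, _, isSubcubicTree_pendantGraph_bot⟩
  | succ n ih =>
    obtain ⟨V, _, G, hG⟩ := ih
    obtain ⟨l, hl⟩ : Finset.Nonempty {v | G.degree v = 1} :=
      Finset.card_pos.1 (hG.card_leaves ▸ Nat.succ_pos _)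
    exact ⟨_, inferInstance, _, hG.pendantGraph_pendantGraph (Finset.mem_filter_univ l |>.1 hl)⟩

end SubcubicTree

namespace Decomp

variable {α : Type} {E : Finset α}

theorem nonempty_of_two_le_card (hE : 2 ≤ E.card) : Nonempty (Decomp α E) := by
  obtain ⟨n, hn⟩ := Nat.exists_eq_add_of_le' hE
  obtain ⟨V, _, G, hG⟩ := exists_isSubcubicTree n
  have : Nonempty V := hG.isTree.connected.nonempty
  have hencard : (E : Set α).encard = {v | G.degree v = 1}.encard := by
    rw [← Finset.coe_filter_univ, Set.encard_coe_eq_coe_finsetCard,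
      Set.encard_coe_eq_coe_finsetCard, hn, hG.card_leaves]
  obtain ⟨leaf, hleaf⟩ := E.finite_toSet.exists_bijOn_of_encard_eq hencard
  exact ⟨{ V, G, leaf
           isTree := hG.isTree
           subcubic := hG.subcubic
           leaf_degree _ ha := hleaf.mapsTo ha
           leaf_injOn := hleaf.injOn
           leaf_surj _ hv := hleaf.surjOn hv }⟩

end Decomp

namespace SetSystem

variable {α : Type} {S T : SetSystem α}

/-- `T` arises from `S` by contracting and deleting elements, where `B` is a set whose adjunction
turns independence in `T` into independence in `S`. For matroids, `B` is a basis of the contracted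
set. -/
structure IsMinorVia (T S : SetSystem α) (B : Finset α) : Prop where
  ground_subset : T.E ⊆ S.E
  subset_ground : B ⊆ S.E
  ind_iff : ∀ X ⊆ T.E, X ∈ T.Ind ↔ X ∪ B ∈ S.Ind

theorem IsMinorVia.eqv_of_eqv {B U X X' : Finset α} (h : T.IsMinorVia S B) (hX : X ⊆ T.E)
    (hX' : X' ⊆ T.E) (hXX' : S.Eqv U (X ∪ B ∩ U) (X' ∪ B ∩ U)) : T.Eqv (U ∩ T.E) X X' := by
  intro Z hZ
  have hZT : Z ⊆ T.E := hZ.trans Finset.sdiff_subset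
  have hZB : Z ∪ B \ U ⊆ S.E \ U := by grind [h.ground_subset, h.subset_ground]
  have hsplit (Y : Finset α) : Y ∪ Z ∪ B = Y ∪ B ∩ U ∪ (Z ∪ B \ U) := by grind
  rw [h.ind_iff _ (Finset.union_subset hX hZT), h.ind_iff _ (Finset.union_subset hX' hZT),
    hsplit, hsplit]
  exact hXX' _ hZB

theorem IsMinorVia.numClasses_inter_le {B : Finset α} (h : T.IsMinorVia S B) (U : Finset α) :
    T.numClasses (U ∩ T.E) ≤ S.numClasses U := by
  have : Finite {X // X ⊆ U} := U.powerset.finite_toSet.subset fun _ ↦ Finset.mem_powerset.2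
  have : Finite (Quotient (S.eqvSetoid U)) := Quotient.finite _
  refine Nat.card_le_card_of_injective (fun q ↦ (⟦⟨q.out.1 ∪ B ∩ U, Finset.union_subset
    (q.out.2.trans Finset.inter_subset_left) Finset.inter_subset_right⟩⟧ :
      Quotient (S.eqvSetoid U))) fun p q hpq ↦ ?_
  refine Quotient.out_equiv_out.1 (h.eqv_of_eqv ?_ ?_ (Quotient.exact hpq))
  exacts [p.out.2.trans Finset.inter_subset_right, q.out.2.trans Finset.inter_subset_right]

theorem exists_forall_numClasses_le_dw (hS : Nonempty (Decomp α S.E)) :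
    ∃ D : Decomp α S.E, ∀ U, D.Displays U → S.numClasses U ≤ S.dw := by
  obtain ⟨D⟩ := hS
  have hbound (U) (hU : D.Displays U) : S.numClasses U ≤ S.E.powerset.sup S.numClasses :=
    Finset.le_sup (Finset.mem_powerset.2 hU.1)
  exact Nat.sInf_mem (s := {k | ∃ D : Decomp α S.E, ∀ U, D.Displays U → S.numClasses U ≤ k})
    ⟨_, D, hbound⟩

-- The junk value `sInf ∅`: a ground set with fewer than two elements has no decomposition.
theorem dw_eq_zero_of_isEmpty (hS : IsEmpty (Decomp α S.E)) : S.dw = 0 := by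
  simp [dw]

theorem IsMinorVia.dw_le {B : Finset α} (h : T.IsMinorVia S B) : T.dw ≤ S.dw := by
  obtain hT | ⟨⟨D₀⟩⟩ := isEmpty_or_nonempty (Decomp α T.E)
  · simp [dw_eq_zero_of_isEmpty hT]
  have hcard : 2 ≤ S.E.card := D₀.two_le_card.trans (Finset.card_le_card h.ground_subset)
  obtain ⟨D, hD⟩ := exists_forall_numClasses_le_dw (Decomp.nonempty_of_two_le_card hcard)
  obtain ⟨D', hD'⟩ := D.exists_isTraceOf h.ground_subset D₀.two_le_card
  refine Nat.sInf_le ⟨D', fun U' hU' ↦ ?_⟩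
  obtain ⟨U, hU, rfl⟩ := hD' U' hU'
  exact (h.numClasses_inter_le U).trans (hD U hU)

end SetSystem

theorem exists_isMinorVia_of_isMinorOf {α : Type} [Fintype α] {M N : Matroid α}
    (hNM : N.IsMinorOf M) : ∃ B, N.toSetSystem.IsMinorVia M.toSetSystem B := by
  obtain ⟨C, D, hC, -, -, rfl⟩ := hNM
  obtain ⟨I, hI⟩ := M.exists_isBasis C
  refine ⟨I.toFinset, ?_, ?_, fun X hX ↦ ?_⟩
  · exact Set.Finite.toFinset_subset_toFinset.2 (Set.sdiff_subset.trans Set.sdiff_subset)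
  · simpa [Matroid.toSetSystem] using hI.subset.trans hC
  have hXE : (X : Set α) ⊆ (M.E \ C) \ D := Set.Finite.subset_toFinset.1 hX
  obtain ⟨hXC, hXD⟩ := Set.subset_sdiff.1 hXE
  change ((M.contract C).delete D).Indep X ↔ M.Indep ↑(X ∪ I.toFinset)
  rw [Matroid.delete_indep_iff, hI.contract_indep_iff, Finset.coe_union, Set.coe_toFinset]
  simp [hXD, (Set.subset_sdiff.1 hXC).2.symm]

/-- for every positive integer `k`, the class of finite matroids of
decomposition-width at most `k` is minor-closed. -/
theorem statement_4 {α : Type} [Fintype α] (k : ℕ) (hk : 0 < k)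
    (M N : Matroid α) (hNM : N.IsMinorOf M) (hM : M.dw ≤ k) :
    N.dw ≤ k := by
  obtain ⟨B, hB⟩ := exists_isMinorVia_of_isMinorOf hNM
  exact hB.dw_le.trans hM
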